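/- Let (E,d_E) be a separable metric space, let p ≥ 1 and let μ ∈ 𝒫_p(E). Then for every β with 0 ≤ β < 1/(2p): limsup_{n→∞} n^β · b_{n,p}(μ) ≤ limsup_{n→∞} n^β · (𝔼[W_p(μ_n,μ)^p])^{1/p} ≤ (10/(1/(2p) − β)) · limsup_{n→∞} n^β · b_{n,p}(μ), where μ_n is the empirical measure of μ with sample size n. -/

import Mathlib

open MeasureTheory ENNReal Filter

noncomputable section

/-- The `p`-Wasserstein distance between two measures on a metric space, as an
extended nonnegative real: the infimum over all couplings `γ` (measures on `E × E`
with the prescribed marginals) of `(∫ d(x,y)^p dγ)^(1/p)`. -/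
def Wp {E : Type*} [MetricSpace E] [MeasurableSpace E] (p : ℝ) (μ ν : Measure E) : ℝ≥0∞ :=
  ⨅ γ ∈ {γ : Measure (E × E) | γ.map Prod.fst = μ ∧ γ.map Prod.snd = ν},
    (∫⁻ z, edist z.1 z.2 ^ p ∂γ) ^ (1 / p)

/-- The (uniform) discrete measure `(1/n) ∑ δ_{X i}`. -/
def empiricalMeasure {E : Type*} [MeasurableSpace E] (n : ℕ) (X : Fin n → E) : Measure E :=
  (n : ℝ≥0∞)⁻¹ • ∑ i, Measure.dirac (X i)

/-- The law of `n` independent samples of `μ`. -/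
def sampleMeasure {E : Type*} [MeasurableSpace E] (μ : Measure E) (n : ℕ) :
    Measure (Fin n → E) :=
  Measure.pi fun _ => μ

/-- `𝔼[W_p(μ_n, μ)]`, where `μ_n` is the empirical measure of `μ` with sample size `n`. -/
def expWp {E : Type*} [MetricSpace E] [MeasurableSpace E] (p : ℝ) (μ : Measure E) (n : ℕ) :
    ℝ≥0∞ :=
  ∫⁻ X, Wp p (empiricalMeasure n X) μ ∂(sampleMeasure μ n)

/-- `(𝔼[W_p(μ_n, μ)^p])^{1/p}`, where `μ_n` is the empirical measure of `μ` with
sample size `n`. -/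
def expWpPow {E : Type*} [MetricSpace E] [MeasurableSpace E] (p : ℝ) (μ : Measure E) (n : ℕ) :
    ℝ≥0∞ :=
  (∫⁻ X, (Wp p (empiricalMeasure n X) μ) ^ p ∂(sampleMeasure μ n)) ^ (1 / p)

/-- The optimal uniform quantization error
`b_{n,p}(μ) = inf_{x₁,…,x_n} W_p(μ, (1/n) ∑ δ_{x_i})`. -/
def unifQuantErr {E : Type*} [MetricSpace E] [MeasurableSpace E] (p : ℝ) (n : ℕ)
    (μ : Measure E) : ℝ≥0∞ :=
  ⨅ x : Fin n → E, Wp p μ (empiricalMeasure n x)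

/-- The optimal quantization error `e_{n,p}(μ)`: the infimum of `W_p(μ, ν)` over all
probability measures `ν` supported on at most `n` points. -/
def quantErr {E : Type*} [MetricSpace E] [MeasurableSpace E] (p : ℝ) (n : ℕ)
    (μ : Measure E) : ℝ≥0∞ :=
  ⨅ ν ∈ {ν : Measure E | IsProbabilityMeasure ν ∧
      ∃ S : Finset E, S.card ≤ n ∧ ν (↑S : Set E)ᶜ = 0}, Wp p μ ν

/-- `μ` has a finite `p`-th moment: `∫ d(x, x₀)^p dμ(x) < ∞` for some `x₀`. -/
def HasFiniteMoment {E : Type*} [MetricSpace E] [MeasurableSpace E] (p : ℝ)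
    (μ : Measure E) : Prop :=
  ∃ x₀ : E, ∫⁻ x, edist x x₀ ^ p ∂μ ≠ ∞

end

/-!
The lower bound holds because a sample of size `n` is one admissible choice of `n` quantization
points.

For the upper bound, fix a near-optimal uniform quantizer `ν k` of `μ` with `4 ^ k` atoms for each
`k`, a Markov kernel `P k` pushing `ν (k + 1)` to `ν k` at cost about
`b_{4 ^ (k + 1)} + b_{4 ^ k}`, and a kernel `κ` pushing `μ` to `ν K` at cost about `b_{4 ^ K}`.
Applying `κ` and then `P (K - 1), …, P 0` to the empirical measure `μ_n` produces measures on the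
atoms of `ν K, …, ν 0`, and the scales are compared one at a time: the step from `ν (k + 1)` to
`ν k` only has to move the mass by which the image of `μ_n` differs from `ν (k + 1)`. An atom of
`ν (k + 1)` has mass `w ≥ 4 ^ -(k + 1)`, and the mass the sample gives it fluctuates by at most
`(w / n) ^ (1 / 2) ≤ (4 ^ (k + 1) / n) ^ (1 / 2) * w` on average. With `4 ^ K` of order `n` the
resulting bound is a geometric series of ratio `4 ^ (1 / (2 * p) - β)`.
-/

open ProbabilityTheory

section MeasureSub

variable {Ω : Type*} [MeasurableSpace Ω] {μ ν α β : Measure Ω}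

theorem measure_sub_add_eq_sub_add [IsFiniteMeasure μ] [IsFiniteMeasure ν] :
    μ - ν + ν = ν - μ + μ := by
  suffices h : ∀ (μ ν : Measure Ω) [IsFiniteMeasure μ] [IsFiniteMeasure ν],
      μ - ν + ν ≤ ν - μ + μ from le_antisymm (h μ ν) (h ν μ)
  intro μ ν _ _
  have hν : ν ≤ ν - μ + μ := Measure.sub_le_iff_le_add.1 le_rfl
  have hμ : μ ≤ ν - μ + μ := Measure.le_add_left le_rfl
  rw [← Measure.sub_add_cancel_of_le hν]
  gcongr
  exact Measure.sub_le_of_le_add (by rwa [Measure.sub_add_cancel_of_le hν])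

theorem exists_eq_sub_add_of_add_eq_add [IsFiniteMeasure μ] [IsFiniteMeasure ν]
    (h : α + ν = β + μ) :
    ∃ ξ, α = μ - ν + ξ ∧ β = ν - μ + ξ := by
  have hα : μ - ν ≤ α := Measure.sub_le_of_le_add (h ▸ Measure.le_add_left le_rfl)
  refine ⟨α - (μ - ν), ?_, ?_⟩
  · rw [add_comm, Measure.sub_add_cancel_of_le hα]
  · have hμ : β + μ = ν - μ + (α - (μ - ν)) + μ := by
      rw [add_right_comm, ← measure_sub_add_eq_sub_add (μ := μ), ← h, add_comm (μ - ν + ν),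
        ← add_assoc, Measure.sub_add_cancel_of_le hα]
    rw [← Measure.add_sub_cancel (μ := β) (ν := μ), hμ, Measure.add_sub_cancel]

theorem measure_sub_apply_singleton [MeasurableSingletonClass Ω] [IsFiniteMeasure ν] (a : Ω) :
    (μ - ν) {a} = μ {a} - ν {a} := by
  rcases le_total (μ {a}) (ν {a}) with h | h
  · rw [tsub_eq_zero_of_le h]
    refine Measure.sub_apply_eq_zero_of_restrict_le_restrict ?_ (measurableSet_singleton a)
    rw [Measure.restrict_singleton, Measure.restrict_singleton]
    gcongr
  · have hle : ν.restrict {a} ≤ μ.restrict {a} := by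
      rw [Measure.restrict_singleton, Measure.restrict_singleton]
      gcongr
    rw [← Measure.restrict_apply_self,
      Measure.restrict_sub_eq_restrict_sub_restrict (measurableSet_singleton a),
      Measure.sub_apply (measurableSet_singleton a) hle]
    simp only [Measure.restrict_apply_self]

theorem lintegral_eq_sum_of_ae_mem_finset [MeasurableSingletonClass Ω] {S : Finset Ω}
    (hμ : ∀ᵐ x ∂μ, x ∈ S) (f : Ω → ℝ≥0∞) : ∫⁻ x, f x ∂μ = ∑ s ∈ S, f s * μ {s} := by
  rw [← Measure.restrict_eq_self_of_ae_mem hμ]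
  exact (lintegral_finset S f).trans <| Finset.sum_congr rfl fun s _ ↦ by
    rw [Measure.restrict_eq_self_of_ae_mem hμ]

theorem lintegral_sub_eq_sum [MeasurableSingletonClass Ω] [IsFiniteMeasure ν] {S : Finset Ω}
    (hμ : ∀ᵐ x ∂μ, x ∈ S) (f : Ω → ℝ≥0∞) :
    ∫⁻ x, f x ∂(μ - ν) = ∑ s ∈ S, f s * (μ {s} - ν {s}) := by
  simp only [lintegral_eq_sum_of_ae_mem_finset (ae_mono Measure.sub_le hμ),
    measure_sub_apply_singleton]

end MeasureSub

section Disintegration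

variable {Ω Ω' : Type*} [MeasurableSpace Ω] [MeasurableSpace Ω']

theorem exists_measurable_retract [MeasurableSingletonClass Ω] {S : Set Ω} (hS : S.Countable)
    (hne : S.Nonempty) : ∃ r : Ω → S, Measurable r ∧ ∀ s (hs : s ∈ S), r s = ⟨s, hs⟩ := by
  classical
  obtain ⟨s₀, hs₀⟩ := hne
  refine ⟨fun x ↦ if hx : x ∈ S then ⟨x, hx⟩ else ⟨s₀, hs₀⟩, ?_, fun s hs ↦ dif_pos hs⟩
  exact Measurable.dite measurable_id measurable_const hS.measurableSet

theorem exists_kernel_compProd_eq [MeasurableSingletonClass Ω'] {S : Set Ω'} (hS : S.Countable)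
    (hne : S.Nonempty) {γ : Measure (Ω × Ω')} [IsFiniteMeasure γ] (hγ : ∀ᵐ z ∂γ, z.2 ∈ S) :
    ∃ κ : Kernel Ω Ω', IsMarkovKernel κ ∧ (∀ x, ∀ᵐ y ∂κ x, y ∈ S) ∧
      γ.map Prod.fst ⊗ₘ κ = γ := by
  obtain ⟨r, hr, hrS⟩ := exists_measurable_retract hS hne
  have : Countable S := hS
  have : Nonempty S := hne.to_subtype
  let γS : Measure (Ω × S) := γ.map (Prod.map id r)
  have hincl : Measurable (Prod.map id Subtype.val : Ω × S → Ω × Ω') := by fun_prop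
  have hγS : γS.map (Prod.map id Subtype.val) = γ := by
    rw [Measure.map_map hincl (by fun_prop)]
    conv_rhs => rw [← Measure.map_id (μ := γ)]
    refine Measure.map_congr (hγ.mono fun z hz ↦ ?_)
    exact Prod.ext rfl (congrArg Subtype.val (hrS z.2 hz))
  have hfst : γS.fst = γ.map Prod.fst := by
    rw [Measure.fst, Measure.map_map measurable_fst (by fun_prop)]
    rfl
  refine ⟨γS.condKernel.map Subtype.val, Kernel.IsMarkovKernel.map _ measurable_subtype_coe,
    fun x ↦ ?_, ?_⟩
  · rw [Kernel.map_apply _ measurable_subtype_coe]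
    exact (ae_map_iff measurable_subtype_coe.aemeasurable hS.measurableSet).2
      (ae_of_all _ fun y ↦ y.2)
  · conv_rhs => rw [← hγS, ← γS.disintegrate γS.condKernel, hfst]
    exact Measure.compProd_map measurable_subtype_coe

theorem map_compProd_comap {X Y Z : Type*} [MeasurableSpace X] [MeasurableSpace Y]
    [MeasurableSpace Z] {f : X → Y} (hf : Measurable f) (μ : Measure X) [SFinite μ]
    (κ : Kernel Y Z) [IsSFiniteKernel κ] :
    (μ ⊗ₘ κ.comap f hf).map (Prod.map f id) = μ.map f ⊗ₘ κ := by
  have hmap : Measurable (Prod.map f id : X × Z → Y × Z) := hf.prodMap measurable_id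
  refine Measure.ext_of_lintegral _ fun g hg ↦ ?_
  calc ∫⁻ w, g w ∂(μ ⊗ₘ κ.comap f hf).map (Prod.map f id)
      = ∫⁻ x, ∫⁻ z, g (f x, z) ∂κ (f x) ∂μ := by
        rw [lintegral_map hg hmap]
        exact Measure.lintegral_compProd (hg.comp hmap)
    _ = ∫⁻ w, g w ∂(μ.map f ⊗ₘ κ) := by
        rw [Measure.lintegral_compProd hg, lintegral_map hg.lintegral_kernel_prod_right' hf]

end Disintegration

section Wasserstein

variable {E : Type*} [MetricSpace E] [MeasurableSpace E] {p : ℝ} {μ ν ξ α β : Measure E}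

/-- The cost `∫ d(x, y)^p dγ(x, y)` of a transport plan `γ`. -/
noncomputable def transportCost {E : Type*} [MetricSpace E] [MeasurableSpace E] (p : ℝ)
    (γ : Measure (E × E)) : ℝ≥0∞ :=
  ∫⁻ z, edist z.1 z.2 ^ p ∂γ

theorem Wp_le_transportCost {γ : Measure (E × E)} (hμ : γ.map Prod.fst = μ)
    (hν : γ.map Prod.snd = ν) : Wp p μ ν ≤ transportCost p γ ^ (1 / p) :=
  iInf₂_le γ ⟨hμ, hν⟩

theorem exists_coupling_of_Wp_lt {c : ℝ≥0∞} (h : Wp p μ ν < c) :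
    ∃ γ : Measure (E × E), γ.map Prod.fst = μ ∧ γ.map Prod.snd = ν ∧
      transportCost p γ ^ (1 / p) < c := by
  obtain ⟨γ, ⟨hμ, hν⟩, hγ⟩ := by simpa only [Wp, iInf_lt_iff, exists_prop] using h
  exact ⟨γ, hμ, hν, hγ⟩

theorem Wp_comm (p : ℝ) (μ ν : Measure E) : Wp p μ ν = Wp p ν μ := by
  suffices h : ∀ μ ν : Measure E, Wp p μ ν ≤ Wp p ν μ from le_antisymm (h μ ν) (h ν μ)
  intro μ ν
  refine le_iInf₂ fun γ ⟨hν, hμ⟩ ↦ ?_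
  have hswap : transportCost p (γ.map Prod.swap) = ∫⁻ z, edist z.1 z.2 ^ p ∂γ :=
    (lintegral_map_equiv _ MeasurableEquiv.prodComm).trans <|
      lintegral_congr fun z ↦ congrArg (· ^ p) (edist_comm z.2 z.1)
  rw [← hswap]
  apply Wp_le_transportCost
  · rwa [Measure.map_map measurable_fst measurable_swap]
  · rwa [Measure.map_map measurable_snd measurable_swap]

theorem Wp_add_right_le (hp : 0 < p) (μ ν ξ : Measure E) :
    Wp p (μ + ξ) (ν + ξ) ≤ Wp p μ ν := by
  refine le_iInf₂ fun γ ⟨hμ, hν⟩ ↦ ?_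
  have hdiag : transportCost p (ξ.map Function.diag) = 0 :=
    le_antisymm ((lintegral_map_le _ _).trans_eq (by simp [Function.diag, hp])) zero_le
  have hcost : transportCost p (γ + ξ.map Function.diag) = ∫⁻ z, edist z.1 z.2 ^ p ∂γ :=
    (lintegral_add_measure _ γ _).trans (by rw [← transportCost, ← transportCost, hdiag, add_zero])
  rw [← hcost]
  have hmeas : Measurable (Function.diag : E → E × E) := measurable_id.prodMk measurable_id
  apply Wp_le_transportCost
  · rw [Measure.map_add _ _ measurable_fst, hμ, Measure.map_map measurable_fst hmeas]
    exact congrArg (μ + ·) Measure.map_id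
  · rw [Measure.map_add _ _ measurable_snd, hν, Measure.map_map measurable_snd hmeas]
    exact congrArg (ν + ·) Measure.map_id

theorem Wp_self (hp : 0 < p) (μ : Measure E) : Wp p μ μ = 0 := by
  have h₀ : Wp p (0 : Measure E) 0 ≤ 0 :=
    (Wp_le_transportCost (γ := 0) (Measure.map_zero _) (Measure.map_zero _)).trans_eq
      (by simp [transportCost, hp])
  simpa using (Wp_add_right_le hp 0 0 μ).trans h₀

theorem Wp_le_Wp_sub_sub [IsFiniteMeasure μ] [IsFiniteMeasure ν] (hp : 0 < p)
    (h : α + ν = β + μ) : Wp p α β ≤ Wp p (μ - ν) (ν - μ) := by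
  obtain ⟨ξ, rfl, rfl⟩ := exists_eq_sub_add_of_add_eq_add h
  exact Wp_add_right_le hp _ _ ξ

theorem Wp_comp_le_transportCost [SFinite μ] (κ : Kernel E E) [IsMarkovKernel κ] :
    Wp p μ (κ ∘ₘ μ) ≤ transportCost p (μ ⊗ₘ κ) ^ (1 / p) :=
  Wp_le_transportCost (Measure.fst_compProd μ κ) (Measure.snd_compProd μ κ)

theorem exists_kernel_of_Wp_lt [MeasurableSingletonClass E] [IsFiniteMeasure μ] {S : Set E}
    (hS : S.Countable) (hne : S.Nonempty) (hν : ∀ᵐ y ∂ν, y ∈ S) {c : ℝ≥0∞} (h : Wp p μ ν < c) :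
    ∃ κ : Kernel E E, IsMarkovKernel κ ∧ (∀ x, ∀ᵐ y ∂κ x, y ∈ S) ∧ κ ∘ₘ μ = ν ∧
      transportCost p (μ ⊗ₘ κ) ^ (1 / p) < c := by
  obtain ⟨γ, rfl, rfl, hγ⟩ := exists_coupling_of_Wp_lt h
  have : IsFiniteMeasure γ := Measure.isFiniteMeasure_of_map measurable_fst.aemeasurable
  obtain ⟨κ, hκ, hκS, hκγ⟩ :=
    exists_kernel_compProd_eq hS hne (ae_of_ae_map measurable_snd.aemeasurable hν)
  exact ⟨κ, hκ, hκS, by rw [← Measure.snd_compProd, hκγ, Measure.snd], by rwa [hκγ]⟩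

section Triangle

variable [OpensMeasurableSpace E] [SecondCountableTopology E]

theorem measurable_edist_rpow (p : ℝ) : Measurable fun z : E × E ↦ edist z.1 z.2 ^ p := by
  fun_prop

-- The coupling behind the bound is the first and last marginal of `γ ⊗ₘ κ` on `E × E × E`.
theorem Wp_comp_le_add [IsFiniteMeasure ν] (hp : 1 ≤ p) (κ : Kernel E E) [IsMarkovKernel κ] :
    Wp p μ (κ ∘ₘ ν) ≤ Wp p μ ν + transportCost p (ν ⊗ₘ κ) ^ (1 / p) := by
  rw [Wp, Wp, ENNReal.iInf₂_add]
  refine le_iInf₂ fun γ ⟨hμ, hν⟩ ↦ ?_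
  have : IsFiniteMeasure (γ.map Prod.snd) := hν ▸ inferInstance
  have : IsFiniteMeasure γ := Measure.isFiniteMeasure_of_map measurable_snd.aemeasurable
  let Γ : Measure ((E × E) × E) := γ ⊗ₘ κ.comap Prod.snd measurable_snd
  have hfst : Γ.map Prod.fst = γ := Measure.fst_compProd _ _
  have hsnd : Γ.map (Prod.map Prod.snd id) = ν ⊗ₘ κ := by rw [← hν, ← map_compProd_comap]
  have hmeas : Measurable (Prod.map Prod.snd id : (E × E) × E → E × E) := by fun_prop
  have hends : Measurable (fun w : (E × E) × E ↦ (w.1.1, w.2)) := by fun_prop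
  calc Wp p μ (κ ∘ₘ ν)
      ≤ transportCost p (Γ.map fun w ↦ (w.1.1, w.2)) ^ (1 / p) := by
        apply Wp_le_transportCost
        · rw [Measure.map_map measurable_fst hends, ← hμ, ← hfst,
            Measure.map_map measurable_fst measurable_fst]
          rfl
        · rw [Measure.map_map measurable_snd hends, ← Measure.snd_compProd, ← hsnd, Measure.snd,
            Measure.map_map measurable_snd hmeas]
          rfl
    _ = (∫⁻ w, edist w.1.1 w.2 ^ p ∂Γ) ^ (1 / p) := by
        rw [transportCost, lintegral_map (measurable_edist_rpow p) hends]
    _ ≤ (∫⁻ w, (edist w.1.1 w.1.2 + edist w.1.2 w.2) ^ p ∂Γ) ^ (1 / p) := by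
        gcongr
        exact edist_triangle _ _ _
    _ ≤ (∫⁻ w, edist w.1.1 w.1.2 ^ p ∂Γ) ^ (1 / p) + (∫⁻ w, edist w.1.2 w.2 ^ p ∂Γ) ^ (1 / p) :=
        ENNReal.lintegral_Lp_add_le (by fun_prop) (by fun_prop) hp
    _ = transportCost p γ ^ (1 / p) + transportCost p (ν ⊗ₘ κ) ^ (1 / p) := by
        conv_rhs => rw [← hsnd, ← hfst]
        rw [transportCost, transportCost, lintegral_map (measurable_edist_rpow p) measurable_fst,
          lintegral_map (measurable_edist_rpow p) hmeas]
        rfl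

theorem Wp_triangle [IsFiniteMeasure ν] (hp : 1 ≤ p) {S : Set E} (hS : S.Countable)
    (hne : S.Nonempty) (hξ : ∀ᵐ x ∂ξ, x ∈ S) : Wp p μ ξ ≤ Wp p μ ν + Wp p ν ξ := by
  rw [Wp.eq_def p ν, ENNReal.add_iInf₂]
  refine le_iInf₂ fun γ ⟨hγν, hγξ⟩ ↦ ?_
  subst hγν hγξ
  have : IsFiniteMeasure γ := Measure.isFiniteMeasure_of_map (f := Prod.fst) (by fun_prop)
  obtain ⟨κ, hκ, -, hκγ⟩ :=
    exists_kernel_compProd_eq hS hne (ae_of_ae_map measurable_snd.aemeasurable hξ)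
  have h := Wp_comp_le_add (μ := μ) (ν := γ.map Prod.fst) hp κ
  rwa [← Measure.snd_compProd, hκγ] at h

end Triangle

end Wasserstein

section Chaining

/-- The total variation `|μ - ν|` of the difference of two finite measures. -/
noncomputable def absSub {Ω : Type*} [MeasurableSpace Ω] (μ ν : Measure Ω) : Measure Ω :=
  μ - ν + (ν - μ)

instance {Ω : Type*} [MeasurableSpace Ω] (μ ν : Measure Ω) [IsFiniteMeasure μ]
    [IsFiniteMeasure ν] : IsFiniteMeasure (absSub μ ν) := by
  rw [absSub]
  infer_instance

variable {E : Type*} [MetricSpace E] [MeasurableSpace E] [OpensMeasurableSpace E]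
  [SecondCountableTopology E] {p : ℝ} {μ ν : Measure E}

theorem Wp_le_add_Wp_comp [IsFiniteMeasure μ] [IsFiniteMeasure ν] (hp : 1 ≤ p) {S : Set E}
    (hS : S.Countable) (hne : S.Nonempty) (hν : ∀ᵐ x ∂ν, x ∈ S) (κ : Kernel E E)
    [IsMarkovKernel κ] :
    Wp p μ ν ≤ transportCost p (μ ⊗ₘ κ) ^ (1 / p) + Wp p (κ ∘ₘ μ) (κ ∘ₘ ν) +
      transportCost p (ν ⊗ₘ κ) ^ (1 / p) :=
  calc Wp p μ ν ≤ Wp p μ (κ ∘ₘ μ) + (Wp p (κ ∘ₘ μ) (κ ∘ₘ ν) + Wp p (κ ∘ₘ ν) ν) :=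
        (Wp_triangle hp hS hne hν).trans (by gcongr; exact Wp_triangle hp hS hne hν)
    _ ≤ transportCost p (μ ⊗ₘ κ) ^ (1 / p) + (Wp p (κ ∘ₘ μ) (κ ∘ₘ ν) +
          transportCost p (ν ⊗ₘ κ) ^ (1 / p)) := by
        rw [Wp_comm p (κ ∘ₘ ν) ν]
        gcongr <;> exact Wp_comp_le_transportCost κ
    _ = _ := (add_assoc _ _ _).symm

theorem Wp_sub_sub_le_add_Wp_comp [IsFiniteMeasure μ] [IsFiniteMeasure ν] (hp : 1 ≤ p) {S : Set E}
    (hS : S.Countable) (hne : S.Nonempty) (hν : ∀ᵐ x ∂ν, x ∈ S) (κ : Kernel E E)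
    [IsMarkovKernel κ] :
    Wp p (μ - ν) (ν - μ) ≤ 2 * transportCost p (absSub μ ν ⊗ₘ κ) ^ (1 / p) +
      Wp p (κ ∘ₘ μ - κ ∘ₘ ν) (κ ∘ₘ ν - κ ∘ₘ μ) := by
  have hcost : transportCost p (absSub μ ν ⊗ₘ κ) =
      transportCost p ((μ - ν) ⊗ₘ κ) + transportCost p ((ν - μ) ⊗ₘ κ) := by
    rw [absSub, Measure.compProd_add_left]
    exact lintegral_add_measure _ _ _
  have hbalance : κ ∘ₘ (μ - ν) + κ ∘ₘ ν = κ ∘ₘ (ν - μ) + κ ∘ₘ μ := by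
    rw [← Measure.comp_add, ← Measure.comp_add, measure_sub_add_eq_sub_add]
  calc Wp p (μ - ν) (ν - μ)
      ≤ transportCost p ((μ - ν) ⊗ₘ κ) ^ (1 / p) + Wp p (κ ∘ₘ (μ - ν)) (κ ∘ₘ (ν - μ)) +
          transportCost p ((ν - μ) ⊗ₘ κ) ^ (1 / p) :=
        Wp_le_add_Wp_comp hp hS hne (ae_mono Measure.sub_le hν) κ
    _ ≤ transportCost p (absSub μ ν ⊗ₘ κ) ^ (1 / p) +
          Wp p (κ ∘ₘ μ - κ ∘ₘ ν) (κ ∘ₘ ν - κ ∘ₘ μ) +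
          transportCost p (absSub μ ν ⊗ₘ κ) ^ (1 / p) := by
        gcongr
        · exact hcost ▸ le_self_add
        · exact Wp_le_Wp_sub_sub (by positivity) hbalance
        · exact hcost ▸ le_add_self
    _ = _ := by ring

end Chaining

section Sampling

variable {Ω : Type*} [MeasurableSpace Ω] {n : ℕ}

theorem lintegral_empiricalMeasure (X : Fin n → Ω) {f : Ω → ℝ≥0∞} (hf : Measurable f) :
    ∫⁻ x, f x ∂empiricalMeasure n X = (n : ℝ≥0∞)⁻¹ * ∑ i, f (X i) := by
  simp only [empiricalMeasure, lintegral_smul_measure, lintegral_finsetSum_measure,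
    lintegral_dirac' _ hf, smul_eq_mul]

theorem isProbabilityMeasure_empiricalMeasure (hn : n ≠ 0) (X : Fin n → Ω) :
    IsProbabilityMeasure (empiricalMeasure n X) := by
  constructor
  rw [← lintegral_one, lintegral_empiricalMeasure X measurable_const]
  simp [ENNReal.inv_mul_cancel, hn]

theorem measurable_lintegral_empiricalMeasure (n : ℕ) {f : Ω → ℝ≥0∞} (hf : Measurable f) :
    Measurable fun X : Fin n → Ω ↦ ∫⁻ x, f x ∂empiricalMeasure n X := by
  simp only [lintegral_empiricalMeasure _ hf]
  fun_prop

theorem ae_empiricalMeasure_mem_range [MeasurableSingletonClass Ω] (X : Fin n → Ω) :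
    ∀ᵐ y ∂empiricalMeasure n X, y ∈ Set.range X := by
  refine Measure.ae_smul_measure (ae_iff.2 ?_) _
  simp [Measure.finsetSum_apply]

theorem inv_le_empiricalMeasure_singleton [MeasurableSingletonClass Ω] {X : Fin n → Ω} {y : Ω}
    (hy : y ∈ Set.range X) : (n : ℝ≥0∞)⁻¹ ≤ empiricalMeasure n X {y} := by
  obtain ⟨i, rfl⟩ := hy
  rw [empiricalMeasure, Measure.smul_apply, smul_eq_mul, Measure.finsetSum_apply]
  refine le_mul_of_one_le_right' ?_
  calc (1 : ℝ≥0∞) = Measure.dirac (X i) {X i} := by simp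
    _ ≤ ∑ j, Measure.dirac (X j) {X i} :=
      Finset.single_le_sum (f := fun j ↦ Measure.dirac (X j) {X i}) (fun _ _ ↦ zero_le)
        (Finset.mem_univ i)

variable {μ : Measure Ω} [IsProbabilityMeasure μ]

instance (n : ℕ) : IsProbabilityMeasure (sampleMeasure μ n) := by
  rw [sampleMeasure]
  infer_instance

theorem lintegral_lintegral_empiricalMeasure (hn : n ≠ 0) {f : Ω → ℝ≥0∞} (hf : Measurable f) :
    ∫⁻ X, ∫⁻ x, f x ∂empiricalMeasure n X ∂sampleMeasure μ n = ∫⁻ x, f x ∂μ := by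
  have hcoord (i : Fin n) : ∫⁻ X, f (X i) ∂sampleMeasure μ n = ∫⁻ x, f x ∂μ :=
    (measurePreserving_eval (fun _ ↦ μ) i).lintegral_comp hf
  simp only [lintegral_empiricalMeasure _ hf]
  rw [lintegral_const_mul _ (by fun_prop), lintegral_finsetSum _ (by fun_prop)]
  simp only [hcoord, Finset.sum_const, Finset.card_univ, Fintype.card_fin, nsmul_eq_mul]
  rw [← mul_assoc, ENNReal.inv_mul_cancel (by simpa) (by simp), one_mul]

/-- The mean of `h` over a sample of size `n`. -/
noncomputable def sampleMean {Ω : Type*} (n : ℕ) (h : Ω → ℝ) (X : Fin n → Ω) : ℝ :=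
  (n : ℝ)⁻¹ * ∑ i, h (X i)

theorem memLp_comp_eval {q : ℝ≥0∞} {h : Ω → ℝ} (hh : MemLp h q μ) (i : Fin n) :
    MemLp (fun X : Fin n → Ω ↦ h (X i)) q (sampleMeasure μ n) :=
  hh.comp_measurePreserving (measurePreserving_eval (fun _ ↦ μ) i)

theorem memLp_sampleMean {q : ℝ≥0∞} {h : Ω → ℝ} (hh : MemLp h q μ) :
    MemLp (sampleMean n h) q (sampleMeasure μ n) :=
  (memLp_finsetSum _ fun i _ ↦ memLp_comp_eval hh i).const_mul _

theorem integral_sampleMean (hn : n ≠ 0) {h : Ω → ℝ} (hh : Integrable h μ) :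
    ∫ X, sampleMean n h X ∂sampleMeasure μ n = ∫ x, h x ∂μ := by
  have hcoord (i : Fin n) : ∫ X, h (X i) ∂sampleMeasure μ n = ∫ x, h x ∂μ :=
    integral_comp_eval (μ := fun _ ↦ μ) (i := i) hh.aestronglyMeasurable
  have hint (i : Fin n) : Integrable (fun X : Fin n → Ω ↦ h (X i)) (sampleMeasure μ n) :=
    memLp_one_iff_integrable.1 (memLp_comp_eval (memLp_one_iff_integrable.2 hh) i)
  simp only [sampleMean]
  rw [integral_const_mul, integral_finsetSum _ fun i _ ↦ hint i]
  simp only [hcoord, Finset.sum_const, Finset.card_univ, Fintype.card_fin, nsmul_eq_mul]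
  field_simp

theorem variance_sampleMean {h : Ω → ℝ} (hh : MemLp h 2 μ) :
    Var[sampleMean n h; sampleMeasure μ n] = Var[h; μ] / n := by
  have hsum : Var[fun X : Fin n → Ω ↦ ∑ i, h (X i); sampleMeasure μ n] = n * Var[h; μ] := by
    simpa [sampleMeasure, ← Finset.sum_fn] using
      variance_sum_pi (μ := fun _ : Fin n ↦ μ) (X := fun _ ↦ h) fun _ ↦ hh
  calc Var[sampleMean n h; sampleMeasure μ n] = (n : ℝ)⁻¹ ^ 2 * (n * Var[h; μ]) := by
        rw [← hsum]
        exact variance_const_mul _ _ _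
    _ = Var[h; μ] / n := by
        rcases eq_or_ne n 0 with rfl | hn
        · simp
        · field_simp

theorem lintegral_enorm_sub_integral_le {X : Ω → ℝ} (hX : MemLp X 2 μ) :
    ∫⁻ ω, ‖X ω - μ[X]‖ₑ ∂μ ≤ ENNReal.ofReal Var[X; μ] ^ (1 / 2 : ℝ) := by
  have h := eLpNorm'_le_eLpNorm'_of_exponent_le zero_lt_one one_le_two μ
    (hX.aestronglyMeasurable.sub (aestronglyMeasurable_const (b := μ[X])))
  rw [ofReal_variance hX, evariance]
  simpa [eLpNorm'] using h

theorem variance_le_integral_of_mem_Icc {h : Ω → ℝ} (hh : AEStronglyMeasurable h μ)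
    (h01 : ∀ x, h x ∈ Set.Icc 0 1) : Var[h; μ] ≤ ∫ x, h x ∂μ := by
  have hL2 : MemLp h 2 μ := memLp_of_bounded (ae_of_all _ h01) hh 2
  refine (variance_le_expectation_sq hh).trans ?_
  refine integral_mono hL2.integrable_sq (hL2.integrable one_le_two) fun x ↦ ?_
  exact pow_le_of_le_one (h01 x).1 (h01 x).2 two_ne_zero

theorem ofReal_sub_add_ofReal_sub {x y : ℝ} (hx : 0 ≤ x) (hy : 0 ≤ y) :
    ENNReal.ofReal x - ENNReal.ofReal y + (ENNReal.ofReal y - ENNReal.ofReal x) = ‖x - y‖ₑ := by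
  rw [← ENNReal.ofReal_sub _ hx, ← ENNReal.ofReal_sub _ hy, Real.enorm_eq_ofReal_abs]
  rcases le_total x y with h | h
  · rw [ENNReal.ofReal_of_nonpos (sub_nonpos.2 h), zero_add, abs_sub_comm,
      abs_of_nonneg (sub_nonneg.2 h)]
  · rw [ENNReal.ofReal_of_nonpos (sub_nonpos.2 h), add_zero, abs_of_nonneg (sub_nonneg.2 h)]

theorem lintegral_sub_add_sub_empiricalMeasure_le (hn : n ≠ 0) {g : Ω → ℝ≥0∞} (hg : Measurable g)
    (hg₁ : ∀ x, g x ≤ 1) :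
    ∫⁻ X, (∫⁻ x, g x ∂empiricalMeasure n X - ∫⁻ x, g x ∂μ +
        (∫⁻ x, g x ∂μ - ∫⁻ x, g x ∂empiricalMeasure n X)) ∂sampleMeasure μ n ≤
      ((∫⁻ x, g x ∂μ) / n) ^ (1 / 2 : ℝ) := by
  obtain ⟨h, hh, h01, rfl⟩ : ∃ h : Ω → ℝ, Measurable h ∧ (∀ x, h x ∈ Set.Icc 0 1) ∧
      g = fun x ↦ ENNReal.ofReal (h x) :=
    ⟨fun x ↦ (g x).toReal, hg.ennreal_toReal,
      fun x ↦ ⟨toReal_nonneg, toReal_mono one_ne_top (hg₁ x)⟩,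
      funext fun x ↦ (ofReal_toReal (ne_top_of_le_ne_top one_ne_top (hg₁ x))).symm⟩
  have h₀ (x : Ω) : 0 ≤ h x := (h01 x).1
  have hL2 : MemLp h 2 μ := memLp_of_bounded (ae_of_all _ h01) hh.aestronglyMeasurable 2
  have hint : Integrable h μ := hL2.integrable one_le_two
  have hmean : ∫⁻ x, ENNReal.ofReal (h x) ∂μ = ENNReal.ofReal (∫ x, h x ∂μ) :=
    (ofReal_integral_eq_lintegral_ofReal hint (ae_of_all _ h₀)).symm
  have hsample (X : Fin n → Ω) :
      ∫⁻ x, ENNReal.ofReal (h x) ∂empiricalMeasure n X = ENNReal.ofReal (sampleMean n h X) := by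
    rw [lintegral_empiricalMeasure X hg, sampleMean, ENNReal.ofReal_mul (by positivity),
      ENNReal.ofReal_inv_of_pos (by positivity), ofReal_natCast,
      ENNReal.ofReal_sum_of_nonneg fun i _ ↦ h₀ _]
  have hsample₀ (X : Fin n → Ω) : 0 ≤ sampleMean n h X :=
    mul_nonneg (by positivity) (Finset.sum_nonneg fun i _ ↦ h₀ _)
  simp only [hsample, hmean, ofReal_sub_add_ofReal_sub (hsample₀ _) (integral_nonneg h₀)]
  rw [← integral_sampleMean hn hint]
  refine (lintegral_enorm_sub_integral_le (memLp_sampleMean hL2)).trans ?_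
  rw [variance_sampleMean hL2, integral_sampleMean hn hint, ← ofReal_natCast,
    ← ENNReal.ofReal_div_of_pos (by positivity)]
  gcongr
  exact variance_le_integral_of_mem_Icc hh.aestronglyMeasurable h01

variable {Ω' : Type*} [MeasurableSpace Ω'] [MeasurableSingletonClass Ω']

theorem lintegral_absSub_eq_sum {μ ν : Measure Ω'} [IsFiniteMeasure μ] [IsFiniteMeasure ν]
    {S : Finset Ω'} (hμ : ∀ᵐ x ∂μ, x ∈ S) (hν : ∀ᵐ x ∂ν, x ∈ S) (f : Ω' → ℝ≥0∞) :
    ∫⁻ x, f x ∂absSub μ ν = ∑ s ∈ S, f s * (μ {s} - ν {s} + (ν {s} - μ {s})) := by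
  simp only [absSub, lintegral_add_measure, lintegral_sub_eq_sum hμ, lintegral_sub_eq_sum hν,
    ← Finset.sum_add_distrib, mul_add]

theorem lintegral_absSub_comp_eq_sum {κ : Kernel Ω Ω'} [IsMarkovKernel κ] {S : Finset Ω'}
    (hκ : ∀ x, ∀ᵐ y ∂κ x, y ∈ S) (μ ν : Measure Ω) [IsFiniteMeasure μ] [IsFiniteMeasure ν]
    (f : Ω' → ℝ≥0∞) :
    ∫⁻ y, f y ∂absSub (κ ∘ₘ μ) (κ ∘ₘ ν) =
      ∑ s ∈ S, f s * (∫⁻ x, κ x {s} ∂μ - ∫⁻ x, κ x {s} ∂ν +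
        (∫⁻ x, κ x {s} ∂ν - ∫⁻ x, κ x {s} ∂μ)) := by
  have hmem (ξ : Measure Ω) : ∀ᵐ y ∂(κ ∘ₘ ξ), y ∈ S :=
    Measure.ae_comp_of_ae_ae S.measurableSet (ae_of_all _ hκ)
  rw [lintegral_absSub_eq_sum (hmem μ) (hmem ν)]
  simp only [Measure.bind_apply (measurableSet_singleton _) κ.aemeasurable]

theorem measurable_lintegral_absSub_comp {κ : Kernel Ω Ω'} [IsMarkovKernel κ] {S : Finset Ω'}
    (hκ : ∀ x, ∀ᵐ y ∂κ x, y ∈ S) (hn : n ≠ 0) (μ : Measure Ω) [IsFiniteMeasure μ]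
    (f : Ω' → ℝ≥0∞) :
    Measurable fun X : Fin n → Ω ↦
      ∫⁻ y, f y ∂absSub (κ ∘ₘ empiricalMeasure n X) (κ ∘ₘ μ) := by
  have := isProbabilityMeasure_empiricalMeasure (Ω := Ω) hn
  have hmeas (s : Ω') := measurable_lintegral_empiricalMeasure n
    (κ.measurable_coe (measurableSet_singleton s))
  simp only [lintegral_absSub_comp_eq_sum hκ]
  fun_prop

theorem lintegral_absSub_comp_empiricalMeasure_le {κ : Kernel Ω Ω'} [IsMarkovKernel κ]
    {S : Finset Ω'} (hκ : ∀ x, ∀ᵐ y ∂κ x, y ∈ S) (hn : n ≠ 0) {m : ℕ}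
    (hm : ∀ s ∈ S, (m : ℝ≥0∞)⁻¹ ≤ (κ ∘ₘ μ) {s}) (f : Ω' → ℝ≥0∞) :
    ∫⁻ X, ∫⁻ y, f y ∂absSub (κ ∘ₘ empiricalMeasure n X) (κ ∘ₘ μ) ∂sampleMeasure μ n ≤
      (m / n) ^ (1 / 2 : ℝ) * ∫⁻ y, f y ∂(κ ∘ₘ μ) := by
  have := isProbabilityMeasure_empiricalMeasure (Ω := Ω) hn
  have hmeas (s : Ω') : Measurable fun x ↦ κ x {s} :=
    κ.measurable_coe (measurableSet_singleton s)
  have hmeas' (s : Ω') := measurable_lintegral_empiricalMeasure n (hmeas s)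
  have hatom (s : Ω') : ∫⁻ x, κ x {s} ∂μ = (κ ∘ₘ μ) {s} :=
    (Measure.bind_apply (measurableSet_singleton s) κ.aemeasurable).symm
  have hS : ∀ᵐ y ∂(κ ∘ₘ μ), y ∈ S :=
    Measure.ae_comp_of_ae_ae S.measurableSet (ae_of_all _ hκ)
  simp only [lintegral_absSub_comp_eq_sum hκ]
  rw [lintegral_finsetSum _ (by fun_prop), lintegral_eq_sum_of_ae_mem_finset hS, Finset.mul_sum]
  refine Finset.sum_le_sum fun s hs ↦ ?_
  rw [lintegral_const_mul _ (by fun_prop), mul_left_comm]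
  gcongr
  refine (lintegral_sub_add_sub_empiricalMeasure_le hn (hmeas s) fun x ↦ prob_le_one).trans ?_
  rw [hatom s]
  set w := (κ ∘ₘ μ) {s}
  have hmw : 1 ≤ m * w :=
    (ENNReal.inv_le_iff_le_mul (fun h ↦ absurd h (measure_ne_top _ _))
      (fun h ↦ absurd h (natCast_ne_top m))).1 (hm s hs)
  calc (w / n) ^ (1 / 2 : ℝ) ≤ (m / n * w ^ (2 : ℝ)) ^ (1 / 2 : ℝ) := by
        gcongr
        calc w / n ≤ m * w * (w / n) := le_mul_of_one_le_left' hmw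
          _ = m / n * w ^ (2 : ℝ) := by
            rw [ENNReal.rpow_two]
            simp only [div_eq_mul_inv]
            ring
    _ = (m / n) ^ (1 / 2 : ℝ) * w := by
        rw [ENNReal.mul_rpow_of_nonneg _ _ (by norm_num), ← ENNReal.rpow_mul]
        norm_num

end Sampling

section NonasymptoticBound

theorem eq_of_ae_mem_subsingleton {Ω : Type*} [MeasurableSpace Ω] {μ ν : Measure Ω}
    [IsProbabilityMeasure μ] [IsProbabilityMeasure ν] {S : Set Ω} (hS : S.Subsingleton)
    (hμ : ∀ᵐ x ∂μ, x ∈ S) (hν : ∀ᵐ x ∂ν, x ∈ S) : μ = ν := by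
  obtain ⟨a, ha⟩ := hμ.exists
  have key (ξ : Measure Ω) [IsProbabilityMeasure ξ] (hξ : ∀ᵐ x ∂ξ, x ∈ S) :
      ξ = Measure.dirac a := by
    calc ξ = ξ.map id := Measure.map_id.symm
      _ = ξ.map fun _ ↦ a := Measure.map_congr (hξ.mono fun x hx ↦ hS hx ha)
      _ = Measure.dirac a := by simp
  rw [key μ hμ, key ν hν]

variable {E : Type*} [MetricSpace E] [MeasurableSpace E] [OpensMeasurableSpace E]
  [SecondCountableTopology E] {p : ℝ} {n : ℕ} {μ : Measure E} [IsProbabilityMeasure μ]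

theorem transportCost_compProd (p : ℝ) (α : Measure E) [SFinite α] (κ : Kernel E E)
    [IsSFiniteKernel κ] :
    transportCost p (α ⊗ₘ κ) = ∫⁻ x, ∫⁻ y, edist x y ^ p ∂κ x ∂α :=
  Measure.lintegral_compProd (measurable_edist_rpow p)

theorem measurable_lintegral_edist_rpow (p : ℝ) (κ : Kernel E E) [IsSFiniteKernel κ] :
    Measurable fun x ↦ ∫⁻ y, edist x y ^ p ∂κ x :=
  (measurable_edist_rpow p).lintegral_kernel_prod_right'

theorem lintegral_transportCost_compProd_empiricalMeasure (p : ℝ) (hn : n ≠ 0) (κ : Kernel E E)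
    [IsMarkovKernel κ] :
    ∫⁻ X, transportCost p (empiricalMeasure n X ⊗ₘ κ) ∂sampleMeasure μ n =
      transportCost p (μ ⊗ₘ κ) := by
  have := isProbabilityMeasure_empiricalMeasure (Ω := E) hn
  simp only [transportCost_compProd]
  exact lintegral_lintegral_empiricalMeasure hn (measurable_lintegral_edist_rpow p κ)

theorem lintegral_const_mul_rpow_rpow {Ω : Type*} [MeasurableSpace Ω] {ξ : Measure Ω}
    {f : Ω → ℝ≥0∞} (hp : 0 < p) (hf : Measurable f) (c : ℝ≥0∞) :
    (∫⁻ ω, (c * f ω ^ (1 / p)) ^ p ∂ξ) ^ (1 / p) = c * (∫⁻ ω, f ω ∂ξ) ^ (1 / p) := by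
  simp only [ENNReal.mul_rpow_of_nonneg _ _ hp.le, one_div, ENNReal.rpow_inv_rpow hp.ne']
  rw [lintegral_const_mul _ hf, ENNReal.mul_rpow_of_nonneg _ _ (by positivity),
    ENNReal.rpow_rpow_inv hp.ne']

section Level

variable {m : ℕ} {x : Fin m → E} {κ : Kernel E E} [IsMarkovKernel κ]

theorem measurable_transportCost_absSub_comp (p : ℝ) (hn : n ≠ 0)
    (hκx : ∀ s, ∀ᵐ t ∂κ s, t ∈ Set.range x) (P : Kernel E E) [IsSFiniteKernel P] :
    Measurable fun X : Fin n → E ↦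
      transportCost p (absSub (κ ∘ₘ empiricalMeasure n X) (κ ∘ₘ μ) ⊗ₘ P) := by
  have := isProbabilityMeasure_empiricalMeasure (Ω := E) hn
  simp only [transportCost_compProd]
  exact measurable_lintegral_absSub_comp (S := (Set.finite_range x).toFinset)
    (by simpa only [Set.Finite.mem_toFinset]) hn μ _

theorem lintegral_transportCost_absSub_comp_le (p : ℝ) (hn : n ≠ 0)
    (hκx : ∀ s, ∀ᵐ t ∂κ s, t ∈ Set.range x) (hκ : κ ∘ₘ μ = empiricalMeasure m x)
    (P : Kernel E E) [IsSFiniteKernel P] :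
    ∫⁻ X, transportCost p (absSub (κ ∘ₘ empiricalMeasure n X) (κ ∘ₘ μ) ⊗ₘ P) ∂sampleMeasure μ n ≤
      (m / n) ^ (1 / 2 : ℝ) * transportCost p ((κ ∘ₘ μ) ⊗ₘ P) := by
  have := isProbabilityMeasure_empiricalMeasure (Ω := E) hn
  simp only [transportCost_compProd]
  refine lintegral_absSub_comp_empiricalMeasure_le (S := (Set.finite_range x).toFinset)
    (by simpa only [Set.Finite.mem_toFinset]) hn (fun s hs ↦ ?_) _
  rw [hκ]
  exact inv_le_empiricalMeasure_singleton ((Set.finite_range x).mem_toFinset.1 hs)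

theorem lintegral_two_mul_transportCost_rpow_le (hp : 0 < p) (hn : n ≠ 0)
    (hκx : ∀ s, ∀ᵐ t ∂κ s, t ∈ Set.range x) (hκ : κ ∘ₘ μ = empiricalMeasure m x)
    (P : Kernel E E) [IsSFiniteKernel P] :
    (∫⁻ X, (2 * transportCost p (absSub (κ ∘ₘ empiricalMeasure n X) (κ ∘ₘ μ) ⊗ₘ P) ^ (1 / p)) ^ p
        ∂sampleMeasure μ n) ^ (1 / p) ≤
      2 * ((m / n : ℝ≥0∞) ^ (1 / (2 * p)) *
        transportCost p (empiricalMeasure m x ⊗ₘ P) ^ (1 / p)) :=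
  calc _ = 2 * (∫⁻ X, transportCost p (absSub (κ ∘ₘ empiricalMeasure n X) (κ ∘ₘ μ) ⊗ₘ P)
          ∂sampleMeasure μ n) ^ (1 / p) :=
        lintegral_const_mul_rpow_rpow hp (measurable_transportCost_absSub_comp p hn hκx P) 2
    _ ≤ 2 * ((m / n) ^ (1 / 2 : ℝ) * transportCost p ((κ ∘ₘ μ) ⊗ₘ P)) ^ (1 / p) := by
        gcongr
        exact lintegral_transportCost_absSub_comp_le p hn hκx hκ P
    _ = _ := by
        rw [ENNReal.mul_rpow_of_nonneg _ _ (by positivity), ← ENNReal.rpow_mul, hκ,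
          one_div_mul_one_div_rev, mul_comm p]

end Level

theorem exists_bound_Wp_comp_sub_comp {m : ℕ → ℕ} (hm₀ : m 0 = 1)
    {x : ∀ k, Fin (m k) → E} {P : ℕ → Kernel E E} [∀ k, IsMarkovKernel (P k)]
    (hPx : ∀ k s, ∀ᵐ t ∂P k s, t ∈ Set.range (x k))
    (hP : ∀ k, P k ∘ₘ empiricalMeasure (m (k + 1)) (x (k + 1)) = empiricalMeasure (m k) (x k))
    (hp : 1 ≤ p) (hn : n ≠ 0) (K : ℕ) {κ : Kernel E E} [IsMarkovKernel κ]
    (hκx : ∀ s, ∀ᵐ t ∂κ s, t ∈ Set.range (x K)) (hκ : κ ∘ₘ μ = empiricalMeasure (m K) (x K)) :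
    ∃ F : (Fin n → E) → ℝ≥0∞, Measurable F ∧
      (∀ X, Wp p (κ ∘ₘ empiricalMeasure n X - κ ∘ₘ μ) (κ ∘ₘ μ - κ ∘ₘ empiricalMeasure n X) ≤ F X) ∧
      (∫⁻ X, F X ^ p ∂sampleMeasure μ n) ^ (1 / p) ≤ ∑ k ∈ Finset.range K,
        2 * ((m (k + 1) / n : ℝ≥0∞) ^ (1 / (2 * p)) *
          transportCost p (empiricalMeasure (m (k + 1)) (x (k + 1)) ⊗ₘ P k) ^ (1 / p)) := by
  have := isProbabilityMeasure_empiricalMeasure (Ω := E) hn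
  have hp₀ : 0 < p := by linarith
  induction K generalizing κ with
  | zero =>
    have : Subsingleton (Fin (m 0)) := by rw [hm₀]; infer_instance
    have hmem (ξ : Measure E) : ∀ᵐ t ∂(κ ∘ₘ ξ), t ∈ Set.range (x 0) :=
      Measure.ae_comp_of_ae_ae (Set.finite_range _).measurableSet (ae_of_all _ hκx)
    refine ⟨0, measurable_zero, fun X ↦ ?_, by simp [hp₀]⟩
    rw [eq_of_ae_mem_subsingleton (Set.subsingleton_range _) (hmem (empiricalMeasure n X)) (hmem μ),
      Wp_self hp₀]
    exact zero_le
  | succ K ih =>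
    obtain ⟨F, hF, hWF, hFint⟩ := ih (κ := P K ∘ₖ κ)
      (fun s ↦ Kernel.ae_comp_of_ae_ae (Set.finite_range _).measurableSet (ae_of_all _ (hPx K)))
      (by rw [← Measure.comp_assoc, hκ, hP])
    let T (X : Fin n → E) := transportCost p (absSub (κ ∘ₘ empiricalMeasure n X) (κ ∘ₘ μ) ⊗ₘ P K)
    have hT : Measurable T := measurable_transportCost_absSub_comp p hn hκx (P K)
    refine ⟨fun X ↦ 2 * T X ^ (1 / p) + F X, by fun_prop, fun X ↦ ?_, ?_⟩
    · have hS : ∀ᵐ t ∂(κ ∘ₘ μ), t ∈ Set.range (x (K + 1)) :=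
        hκ ▸ ae_empiricalMeasure_mem_range (x (K + 1))
      refine (Wp_sub_sub_le_add_Wp_comp hp (Set.countable_range _) hS.exists hS (P K)).trans ?_
      rw [Measure.comp_assoc, Measure.comp_assoc]
      exact add_le_add le_rfl (hWF X)
    · rw [Finset.sum_range_succ, add_comm]
      refine (ENNReal.lintegral_Lp_add_le (by fun_prop) (by fun_prop) hp).trans
        (add_le_add (lintegral_two_mul_transportCost_rpow_le hp₀ hn hκx hκ (P K)) hFint)

theorem expWpPow_le_of_Wp_comp_sub_comp_le (hp : 1 ≤ p) (hn : n ≠ 0) (κ : Kernel E E)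
    [IsMarkovKernel κ] {F : (Fin n → E) → ℝ≥0∞} (hF : Measurable F)
    (hWF : ∀ X, Wp p (κ ∘ₘ empiricalMeasure n X - κ ∘ₘ μ) (κ ∘ₘ μ - κ ∘ₘ empiricalMeasure n X) ≤
      F X) :
    expWpPow p μ n ≤ 2 * transportCost p (μ ⊗ₘ κ) ^ (1 / p) +
      (∫⁻ X, F X ^ p ∂sampleMeasure μ n) ^ (1 / p) := by
  have := isProbabilityMeasure_empiricalMeasure (Ω := E) hn
  have hp₀ : 0 < p := by linarith
  let a := transportCost p (μ ⊗ₘ κ) ^ (1 / p)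
  let T (X : Fin n → E) := transportCost p (empiricalMeasure n X ⊗ₘ κ)
  have hT : Measurable T := by
    simp only [T, transportCost_compProd]
    exact measurable_lintegral_empiricalMeasure n (measurable_lintegral_edist_rpow p κ)
  have hpoint (X : Fin n → E) : Wp p (empiricalMeasure n X) μ ≤ a + F X + T X ^ (1 / p) := by
    have hX := ae_empiricalMeasure_mem_range X
    rw [Wp_comm]
    refine (Wp_le_add_Wp_comp hp (Set.countable_range X) hX.exists hX κ).trans ?_
    gcongr
    rw [Wp_comm]
    exact (Wp_le_Wp_sub_sub hp₀ (add_comm _ _)).trans (hWF X)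
  calc expWpPow p μ n
      ≤ (∫⁻ X, (a + F X + T X ^ (1 / p)) ^ p ∂sampleMeasure μ n) ^ (1 / p) := by
        rw [expWpPow]
        gcongr
        exact hpoint _
    _ ≤ (∫⁻ _, a ^ p ∂sampleMeasure μ n) ^ (1 / p) +
          (∫⁻ X, F X ^ p ∂sampleMeasure μ n) ^ (1 / p) +
          (∫⁻ X, (T X ^ (1 / p)) ^ p ∂sampleMeasure μ n) ^ (1 / p) := by
        refine (ENNReal.lintegral_Lp_add_le (by fun_prop) (by fun_prop) hp).trans ?_
        gcongr
        exact ENNReal.lintegral_Lp_add_le (by fun_prop) (by fun_prop) hp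
    _ = a + (∫⁻ X, F X ^ p ∂sampleMeasure μ n) ^ (1 / p) + a := by
        congr 2
        · simp [ENNReal.rpow_rpow_inv hp₀.ne']
        · simp only [one_div, ENNReal.rpow_inv_rpow hp₀.ne', T]
          rw [lintegral_transportCost_compProd_empiricalMeasure p hn κ]
    _ = _ := by ring

theorem expWpPow_le_of_unifQuantErr_lt (hp : 1 ≤ p) (hn : n ≠ 0) {m : ℕ → ℕ} (hm₀ : m 0 = 1)
    (hm : ∀ k, m k ≠ 0) {c : ℕ → ℝ≥0∞} (hc : ∀ k, unifQuantErr p (m k) μ < c k) (K : ℕ) :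
    expWpPow p μ n ≤ 2 * c K + ∑ k ∈ Finset.range K,
      2 * ((m (k + 1) / n : ℝ≥0∞) ^ (1 / (2 * p)) * (c (k + 1) + c k)) := by
  choose x hx using fun k ↦ iInf_lt_iff.1 (hc k)
  have (k : ℕ) : IsProbabilityMeasure (empiricalMeasure (m k) (x k)) :=
    isProbabilityMeasure_empiricalMeasure (hm k) (x k)
  have hmem (k : ℕ) := ae_empiricalMeasure_mem_range (x k)
  have hS (k : ℕ) : (Set.range (x k)).Countable := Set.countable_range (x k)
  have hstep (k : ℕ) : Wp p (empiricalMeasure (m (k + 1)) (x (k + 1)))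
      (empiricalMeasure (m k) (x k)) < c (k + 1) + c k := by
    refine (Wp_triangle hp (hS k) (hmem k).exists (hmem k) (ν := μ)).trans_lt ?_
    rw [Wp_comm p _ μ]
    exact ENNReal.add_lt_add (hx (k + 1)) (hx k)
  choose P hPmarkov hPx hP hPcost using fun k ↦
    exists_kernel_of_Wp_lt (hS k) (hmem k).exists (hmem k) (hstep k)
  obtain ⟨κ, hκmarkov, hκx, hκ, hκcost⟩ :=
    exists_kernel_of_Wp_lt (hS K) (hmem K).exists (hmem K) (hx K)
  obtain ⟨F, hF, hWF, hFint⟩ := exists_bound_Wp_comp_sub_comp hm₀ hPx hP hp hn K hκx hκ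
  refine (expWpPow_le_of_Wp_comp_sub_comp_le hp hn κ hF hWF).trans ?_
  gcongr
  refine hFint.trans ?_
  gcongr with k
  exact (hPcost k).le

end NonasymptoticBound

section UnifQuantErr

variable {E : Type*} [MetricSpace E] [MeasurableSpace E] {p : ℝ} {n : ℕ} {μ : Measure E}
  [IsProbabilityMeasure μ]

theorem unifQuantErr_le_expWpPow (hp : 0 < p) (n : ℕ) :
    unifQuantErr p n μ ≤ expWpPow p μ n :=
  calc unifQuantErr p n μ
      = (∫⁻ _, unifQuantErr p n μ ^ p ∂sampleMeasure μ n) ^ (1 / p) := by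
        simp [ENNReal.rpow_rpow_inv hp.ne']
    _ ≤ expWpPow p μ n := by
        rw [expWpPow]
        gcongr with X
        rw [Wp_comm]
        exact iInf_le _ X

theorem HasFiniteMoment.unifQuantErr_ne_top (hp : 0 < p) (hμ : HasFiniteMoment p μ) (hn : n ≠ 0) :
    unifQuantErr p n μ ≠ ∞ := by
  obtain ⟨x₀, hx₀⟩ := hμ
  have hdirac : empiricalMeasure n (fun _ ↦ x₀) = Measure.dirac x₀ := by
    rw [empiricalMeasure, Finset.sum_const, Finset.card_univ, Fintype.card_fin,
      ← Nat.cast_smul_eq_nsmul ℝ≥0∞, smul_smul, ENNReal.inv_mul_cancel (by simpa) (by simp),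
      one_smul]
  have hmeas : Measurable fun x : E ↦ (x, x₀) := by fun_prop
  have hWp : Wp p μ (empiricalMeasure n fun _ ↦ x₀) ≤
      transportCost p (μ.map fun x ↦ (x, x₀)) ^ (1 / p) := by
    apply Wp_le_transportCost
    · rw [Measure.map_map measurable_fst hmeas]
      exact Measure.map_id
    · rw [Measure.map_map measurable_snd hmeas, hdirac]
      exact (Measure.map_const μ x₀).trans (by simp)
  refine ne_top_of_le_ne_top ?_ ((iInf_le _ _).trans hWp)
  exact rpow_ne_top_of_nonneg (by positivity) (ne_top_of_le_ne_top hx₀ (lintegral_map_le _ _))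

end UnifQuantErr

section Asymptotics

/-- The chaining bound for `n` samples over `K` scales, when the measure at scale `k` has `4 ^ k`
atoms and lies at Wasserstein distance `c k` from the sampled measure. -/
noncomputable def chainingBound (a : ℝ) (c : ℕ → ℝ) (n K : ℕ) : ℝ :=
  2 * c K + ∑ k ∈ Finset.range K, 2 * (((4 : ℝ) ^ (k + 1) / n) ^ a * (c (k + 1) + c k))

theorem chainingBound_const_mul_add (a l : ℝ) (c d : ℕ → ℝ) (n K : ℕ) :
    chainingBound a (fun k ↦ l * c k + d k) n K =
      l * chainingBound a c n K + chainingBound a d n K := by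
  simp only [chainingBound, mul_add, Finset.mul_sum, Finset.sum_add_distrib]
  ring_nf

theorem ofReal_chainingBound {a : ℝ} (ha : 0 ≤ a) {c : ℕ → ℝ} (hc : ∀ k, 0 ≤ c k) {n : ℕ}
    (hn : n ≠ 0) (K : ℕ) :
    ENNReal.ofReal (chainingBound a c n K) = 2 * ENNReal.ofReal (c K) + ∑ k ∈ Finset.range K,
      2 * (((4 ^ (k + 1) : ℕ) / n : ℝ≥0∞) ^ a *
        (ENNReal.ofReal (c (k + 1)) + ENNReal.ofReal (c k))) := by
  have hnonneg (k : ℕ) : 0 ≤ 2 * (((4 : ℝ) ^ (k + 1) / n) ^ a * (c (k + 1) + c k)) :=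
    mul_nonneg zero_le_two (mul_nonneg (by positivity) (add_nonneg (hc _) (hc _)))
  rw [chainingBound, ENNReal.ofReal_add (mul_nonneg zero_le_two (hc K))
    (Finset.sum_nonneg fun k _ ↦ hnonneg k), ENNReal.ofReal_sum_of_nonneg fun k _ ↦ hnonneg k,
    ENNReal.ofReal_mul zero_le_two, ofReal_ofNat]
  congr 1
  refine Finset.sum_congr rfl fun k _ ↦ ?_
  rw [ENNReal.ofReal_mul zero_le_two, ENNReal.ofReal_mul (by positivity), ofReal_ofNat,
    ENNReal.ofReal_add (hc _) (hc _), ← ENNReal.ofReal_rpow_of_nonneg (by positivity) ha,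
    ENNReal.ofReal_div_of_pos (by positivity), ofReal_natCast]
  norm_cast

theorem rpow_mul_chainingBound (a β : ℝ) (c : ℕ → ℝ) {n : ℕ} (hn : n ≠ 0) (K : ℕ) :
    (n : ℝ) ^ β * chainingBound a c n K = 2 * ((n : ℝ) ^ β * c K) + (n : ℝ) ^ (-(a - β)) *
      ∑ k ∈ Finset.range K, 2 * (((4 : ℝ) ^ a) ^ (k + 1) * (c (k + 1) + c k)) := by
  rw [chainingBound, mul_add, Finset.mul_sum, Finset.mul_sum]
  congr 1
  · ring
  refine Finset.sum_congr rfl fun k _ ↦ ?_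
  rw [Real.div_rpow (by positivity) (by positivity), Real.rpow_pow_comm (by norm_num), neg_sub,
    Real.rpow_sub (by positivity)]
  ring

theorem one_le_rpow_four_mul_one_sub {δ : ℝ} (hδ₀ : 0 ≤ δ) (hδ : δ ≤ 1 / 2) :
    1 ≤ (4 : ℝ) ^ δ * (1 - δ) := by
  have hbernoulli : (1 / 2 : ℝ) ^ (2 * δ) ≤ 1 - δ := by
    have h := rpow_one_add_le_one_add_mul_self (s := -1 / 2) (p := 2 * δ) (by norm_num)
      (by linarith) (by linarith)
    norm_num at h ⊢
    linarith
  calc (1 : ℝ) = 4 ^ δ * (1 / 2 : ℝ) ^ (2 * δ) := by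
        rw [Real.rpow_mul (by norm_num), ← Real.mul_rpow (by norm_num) (by positivity)]
        norm_num
    _ ≤ 4 ^ δ * (1 - δ) := by gcongr

theorem sum_pow_succ_le_div {θ δ : ℝ} (hδ : 0 < δ) (hθ : 0 ≤ θ) (h : 1 ≤ θ * (1 - δ)) (K : ℕ) :
    ∑ k ∈ Finset.range K, θ ^ (k + 1) ≤ θ ^ K / δ := by
  induction K with
  | zero => simp [hδ.le]
  | succ K ih =>
    rw [le_div_iff₀ hδ] at ih ⊢
    rw [Finset.sum_range_succ]
    have := mul_le_mul_of_nonneg_left h (pow_nonneg hθ K)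
    linear_combination ih + this

theorem rpow_le_pow_log_succ {b : ℕ} (hb : 1 < b) {r : ℝ} (hr : 0 ≤ r) (n : ℕ) :
    (n : ℝ) ^ r ≤ ((b : ℝ) ^ r) ^ (Nat.log b n + 1) := by
  rw [Real.rpow_pow_comm (by positivity)]
  gcongr
  exact_mod_cast (Nat.lt_pow_succ_log_self hb n).le

theorem pow_log_le_rpow (b : ℕ) {r : ℝ} (hr : 0 ≤ r) {n : ℕ} (hn : n ≠ 0) :
    ((b : ℝ) ^ r) ^ Nat.log b n ≤ (n : ℝ) ^ r := by
  rw [Real.rpow_pow_comm (by positivity)]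
  gcongr
  exact_mod_cast Nat.pow_log_le_self b hn

theorem four_rpow_le_two {r : ℝ} (hr : r ≤ 1 / 2) : (4 : ℝ) ^ r ≤ 2 :=
  calc (4 : ℝ) ^ r ≤ (4 : ℝ) ^ (1 / 2 : ℝ) :=
        Real.rpow_le_rpow_of_exponent_le (by norm_num) hr
    _ = 2 := by rw [← Real.sqrt_eq_rpow, Real.sqrt_eq_iff_mul_self_eq] <;> norm_num

theorem rpow_mul_chainingBound_inv_pow_le {a β : ℝ} (hβ₀ : 0 ≤ β) (hβ : β < a) (ha : a ≤ 1 / 2)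
    {n : ℕ} (hn : n ≠ 0) :
    (n : ℝ) ^ β * chainingBound a (fun k ↦ (((4 : ℝ) ^ β) ^ k)⁻¹) n (Nat.log 4 n) ≤
      8 / (a - β) := by
  set δ := a - β with hδ
  set q := (4 : ℝ) ^ β with hq
  set θ := (4 : ℝ) ^ δ with hθ
  set K := Nat.log 4 n
  have hδ₀ : 0 < δ := sub_pos.2 hβ
  have hn₀ : (0 : ℝ) < n := by positivity
  have hq₀ : 0 < q := by positivity
  have hq₂ : q ≤ 2 := four_rpow_le_two (by linarith)
  have hqθ : (4 : ℝ) ^ a = θ * q := by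
    rw [hθ, hq, ← Real.rpow_add (by norm_num), hδ, sub_add_cancel]
  have hnq : (n : ℝ) ^ β ≤ q ^ (K + 1) := rpow_le_pow_log_succ (by norm_num) hβ₀ n
  have hθn : θ ^ K ≤ (n : ℝ) ^ δ := pow_log_le_rpow 4 hδ₀.le hn
  have hterm (k : ℕ) : 2 * (((4 : ℝ) ^ a) ^ (k + 1) * ((q ^ (k + 1))⁻¹ + (q ^ k)⁻¹)) =
      2 * (1 + q) * θ ^ (k + 1) := by
    rw [hqθ, mul_pow, pow_succ q]
    field_simp
  calc (n : ℝ) ^ β * chainingBound a (fun k ↦ (q ^ k)⁻¹) n K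
      = 2 * ((n : ℝ) ^ β * (q ^ K)⁻¹) +
          (n : ℝ) ^ (-δ) * (2 * (1 + q) * ∑ k ∈ Finset.range K, θ ^ (k + 1)) := by
        simp only [rpow_mul_chainingBound a β _ hn, hterm, Finset.mul_sum, hδ]
    _ ≤ 2 * (q ^ (K + 1) * (q ^ K)⁻¹) + (n : ℝ) ^ (-δ) * (2 * (1 + 2) * ((n : ℝ) ^ δ / δ)) := by
        gcongr
        exact (sum_pow_succ_le_div hδ₀ (by positivity)
          (one_le_rpow_four_mul_one_sub hδ₀.le (by linarith)) K).trans (by gcongr)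
    _ = 2 * q + 6 / δ := by
        rw [Real.rpow_neg hn₀.le]
        field_simp
        ring
    _ ≤ 2 / δ + 6 / δ := by
        gcongr
        rw [le_div_iff₀ hδ₀]
        nlinarith
    _ = 8 / δ := by ring

theorem tendsto_rpow_mul_chainingBound_zero {a β : ℝ} (hβ : β < a) {d : ℕ → ℝ} {k₀ : ℕ}
    (hd : ∀ k ≥ k₀, d k = 0) :
    Tendsto (fun n : ℕ ↦ (n : ℝ) ^ β * chainingBound a d n (Nat.log 4 n)) atTop (nhds 0) := by
  let D := ∑ k ∈ Finset.range k₀, 2 * (((4 : ℝ) ^ a) ^ (k + 1) * (d (k + 1) + d k))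
  have hlim : Tendsto (fun n : ℕ ↦ (n : ℝ) ^ (-(a - β)) * D) atTop (nhds 0) := by
    simpa using ((tendsto_rpow_neg_atTop (sub_pos.2 hβ)).comp
      tendsto_natCast_atTop_atTop).mul_const D
  refine hlim.congr' ?_
  filter_upwards [eventually_ge_atTop (4 ^ k₀)] with n hn
  have hn₀ : n ≠ 0 := (lt_of_lt_of_le (by positivity) hn).ne'
  have hk₀ : k₀ ≤ Nat.log 4 n := Nat.le_log_of_pow_le (by norm_num) hn
  rw [rpow_mul_chainingBound a β d hn₀, hd _ hk₀, mul_zero, mul_zero, zero_add]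
  congr 1
  refine Finset.sum_subset (Finset.range_mono hk₀) fun k _ hk ↦ ?_
  have hk' : k₀ ≤ k := by simpa using hk
  rw [hd k hk', hd (k + 1) (by omega), add_zero, mul_zero, mul_zero]

theorem eventually_rpow_mul_chainingBound_le {a β l : ℝ} (hβ₀ : 0 ≤ β) (hβ : β < a) (ha : a ≤ 1 / 2)
    (hl : 0 < l) {d : ℕ → ℝ} {k₀ : ℕ} (hd : ∀ k ≥ k₀, d k = 0) :
    ∀ᶠ n : ℕ in atTop, (n : ℝ) ^ β *
      chainingBound a (fun k ↦ l * (((4 : ℝ) ^ β) ^ k)⁻¹ + d k) n (Nat.log 4 n) ≤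
        10 / (a - β) * l := by
  have : 0 < a - β := sub_pos.2 hβ
  have htail := (tendsto_rpow_mul_chainingBound_zero hβ hd).eventually_le_const
    (show 0 < 2 / (a - β) * l by positivity)
  filter_upwards [htail, eventually_ne_atTop 0] with n hn hn₀
  rw [chainingBound_const_mul_add, mul_add, mul_left_comm]
  have hgeom := rpow_mul_chainingBound_inv_pow_le hβ₀ hβ ha hn₀
  calc l * ((n : ℝ) ^ β * chainingBound a (fun k ↦ (((4 : ℝ) ^ β) ^ k)⁻¹) n (Nat.log 4 n)) +
        (n : ℝ) ^ β * chainingBound a d n (Nat.log 4 n)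
      ≤ l * (8 / (a - β)) + 2 / (a - β) * l := by gcongr
    _ = 10 / (a - β) * l := by ring

theorem le_ofReal_mul_of_forall_lt {A L : ℝ≥0∞} {C : ℝ} (hC : 0 < C)
    (h : ∀ l : ℝ, 0 < l → L < ENNReal.ofReal l → A ≤ ENNReal.ofReal (C * l)) :
    A ≤ ENNReal.ofReal C * L := by
  have hC' : ENNReal.ofReal C ≠ 0 := (ofReal_pos.2 hC).ne'
  rw [mul_comm, ← ENNReal.div_le_iff hC' ofReal_ne_top]
  refine le_of_forall_gt_imp_ge_of_dense fun x hx ↦ ?_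
  rcases eq_or_ne x ∞ with rfl | hx'
  · exact le_top
  lift x to NNReal using hx'
  have hx₀ : (0 : ℝ) < x := by exact_mod_cast (zero_le.trans_lt hx : (0 : ℝ≥0∞) < x)
  rw [ENNReal.div_le_iff hC' ofReal_ne_top, mul_comm, ← ofReal_coe_nnreal,
    ← ENNReal.ofReal_mul hC.le]
  exact h x hx₀ (by rwa [ofReal_coe_nnreal])

theorem limsup_le_of_le_chainingBound {a β : ℝ} (hβ₀ : 0 ≤ β) (hβ : β < a) (ha : a ≤ 1 / 2)
    {e b : ℕ → ℝ≥0∞} (hb : ∀ k, b (4 ^ k) ≠ ∞)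
    (h : ∀ n ≠ 0, ∀ c : ℕ → ℝ, (∀ k, b (4 ^ k) < ENNReal.ofReal (c k)) →
      ∀ K, e n ≤ ENNReal.ofReal (chainingBound a c n K)) :
    limsup (fun n : ℕ ↦ ENNReal.ofReal ((n : ℝ) ^ β) * e n) atTop ≤
      ENNReal.ofReal (10 / (a - β)) *
        limsup (fun n : ℕ ↦ ENNReal.ofReal ((n : ℝ) ^ β) * b n) atTop := by
  have hδ : 0 < a - β := sub_pos.2 hβ
  refine le_ofReal_mul_of_forall_lt (by positivity) fun l hl hLl ↦ ?_
  obtain ⟨k₀, hk₀⟩ := eventually_atTop.1 (eventually_lt_of_limsup_lt hLl)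
  let d (k : ℕ) : ℝ := if k < k₀ then (b (4 ^ k)).toReal + 1 else 0
  have hd (k : ℕ) (hk : k ≥ k₀) : d k = 0 := if_neg hk.not_gt
  have hbc (k : ℕ) : b (4 ^ k) < ENNReal.ofReal (l * (((4 : ℝ) ^ β) ^ k)⁻¹ + d k) := by
    rcases lt_or_ge k k₀ with hk | hk
    · calc b (4 ^ k) < ENNReal.ofReal ((b (4 ^ k)).toReal + 1) := by
            rw [ENNReal.lt_ofReal_iff_toReal_lt (hb k)]
            exact lt_add_one _
        _ ≤ _ := ENNReal.ofReal_le_ofReal (by simp only [d, if_pos hk]; bound)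
    · have hlk := hk₀ (4 ^ k) (hk.trans (Nat.lt_pow_self (by norm_num)).le)
      rw [hd k hk, add_zero, ← div_eq_mul_inv, ENNReal.ofReal_div_of_pos (by positivity),
        ENNReal.lt_div_iff_mul_lt (by left; positivity) (by simp), mul_comm,
        Real.rpow_pow_comm (by norm_num)]
      exact_mod_cast hlk
  refine limsup_le_of_le (by isBoundedDefault) ?_
  filter_upwards [eventually_rpow_mul_chainingBound_le hβ₀ hβ ha hl hd, eventually_ne_atTop 0]
    with n hn hn₀
  calc ENNReal.ofReal ((n : ℝ) ^ β) * e n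
      ≤ ENNReal.ofReal ((n : ℝ) ^ β) * ENNReal.ofReal (chainingBound a
          (fun k ↦ l * (((4 : ℝ) ^ β) ^ k)⁻¹ + d k) n (Nat.log 4 n)) := by
        gcongr
        exact h n hn₀ _ hbc _
    _ ≤ ENNReal.ofReal (10 / (a - β) * l) := by
        rw [← ENNReal.ofReal_mul (by positivity)]
        exact ENNReal.ofReal_le_ofReal hn

end Asymptotics

theorem expWpPow_le_chainingBound {E : Type*} [MetricSpace E] [MeasurableSpace E]
    [OpensMeasurableSpace E] [SecondCountableTopology E] {p : ℝ} (hp : 1 ≤ p) {μ : Measure E}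
    [IsProbabilityMeasure μ] {n : ℕ} (hn : n ≠ 0) {c : ℕ → ℝ}
    (hc : ∀ k, unifQuantErr p (4 ^ k) μ < ENNReal.ofReal (c k)) (K : ℕ) :
    expWpPow p μ n ≤ ENNReal.ofReal (chainingBound (1 / (2 * p)) c n K) := by
  have hc₀ (k : ℕ) : 0 ≤ c k := (ofReal_pos.1 (zero_le.trans_lt (hc k))).le
  rw [ofReal_chainingBound (by positivity) hc₀ hn]
  exact expWpPow_le_of_unifQuantErr_lt hp hn (pow_zero 4) (fun k ↦ by positivity) hc K

/-- **Corollary (main2corollary, part 2).** Let `(E, d_E)` be a separable metric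
space, `p ≥ 1` and `μ ∈ 𝒫_p(E)`. For every `0 ≤ β < 1/(2p)`:
`limsup n^β b_{n,p}(μ) ≤ limsup n^β (𝔼[W_p(μ_n,μ)^p])^{1/p}
  ≤ (10/(1/(2p) − β)) · limsup n^β b_{n,p}(μ)`. -/
theorem stmt_4 {E : Type*} [MetricSpace E] [TopologicalSpace.SeparableSpace E]
    [MeasurableSpace E] [BorelSpace E]
    (p : ℝ) (hp : 1 ≤ p)
    (μ : Measure E) [IsProbabilityMeasure μ] (hμ : HasFiniteMoment p μ)
    (β : ℝ) (hβ0 : 0 ≤ β) (hβ : β < 1 / (2 * p)) :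
    Filter.limsup (fun n : ℕ => ENNReal.ofReal ((n : ℝ) ^ β) * unifQuantErr p n μ)
        Filter.atTop
      ≤ Filter.limsup (fun n : ℕ => ENNReal.ofReal ((n : ℝ) ^ β) * expWpPow p μ n)
          Filter.atTop ∧
    Filter.limsup (fun n : ℕ => ENNReal.ofReal ((n : ℝ) ^ β) * expWpPow p μ n)
        Filter.atTop
      ≤ ENNReal.ofReal (10 / (1 / (2 * p) - β)) *
          Filter.limsup (fun n : ℕ => ENNReal.ofReal ((n : ℝ) ^ β) * unifQuantErr p n μ)
            Filter.atTop := by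
  have : SecondCountableTopology E := UniformSpace.secondCountable_of_separable E
  have hp₀ : 0 < p := by linarith
  constructor
  · exact limsup_le_limsup (Eventually.of_forall fun n ↦
      mul_le_mul_right (unifQuantErr_le_expWpPow hp₀ n) _)
  · have hp₂ : 1 / (2 * p) ≤ 1 / 2 := by
      gcongr
      linarith
    exact limsup_le_of_le_chainingBound hβ0 hβ hp₂
      (fun k ↦ hμ.unifQuantErr_ne_top hp₀ (by positivity))
      fun n hn c hc K ↦ expWpPow_le_chainingBound hp hn hc K
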